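/- arXiv:1903.00525 — 8 statements merged into one kernel-verified Lean document; each statement's English description precedes it below -/
import Mathlib

section
/- (Proposition, joint convexity of the Lagrangian) Let Σ₀ be an n×n real symmetric positive definite matrix, let P and M be real symmetric matrices (P of size n×n, M of size p×p), let C be a p×n real matrix, V an n×n real matrix, Σ_T^y a p×p real matrix, and c ∈ ℝ. Define, for (X,Y) in Q, the Lagrangian L(X,Y) := −log det(X − Yᵀ Σ₀⁻¹ Y) + trace(P X) + trace(M (C X Cᵀ − Σ_T^y)) + 2 trace(Vᵀ Y) + c. Then L is jointly convex in (X,Y) on Q, i.e., ConvexOn ℝ Q L. -/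
open Matrix

/-!
The function `-log det` lies above each of its tangents: for `A`, `Z` positive definite,
`log det A ≤ log det Z + tr (Z⁻¹ A) - n` (`log_det_le_tangent`), which reduces, by congruence with a
square root of `Z⁻¹`, to `log x ≤ x - 1` on eigenvalues (`log_det_le_trace_sub`).

The map `(X, Y) ↦ S(X, Y) = X - Yᵀ Σ₀⁻¹ Y` is concave for the Loewner order, with the exact defect
`S(a q₁ + b q₂) - (a S(q₁) + b S(q₂)) = a b (Y₁ - Y₂)ᵀ Σ₀⁻¹ (Y₁ - Y₂)` (`schur_combo`). Hence `Q` is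
convex. Taking the tangent at `Z = S(a q₁ + b q₂)` and averaging it over `S(q₁)`, `S(q₂)`, the trace
term is at most `tr (Z⁻¹ Z) = n`, so `log det ∘ S` is concave (`log_det_concave_aux`). The remaining
terms of the Lagrangian are affine.
-/

section

variable {n : ℕ}

lemma log_det_le_trace_sub {B : Matrix (Fin n) (Fin n) ℝ} (hB : B.PosDef) :
    Real.log B.det ≤ B.trace - n := by
  have hdet := hB.1.det_eq_prod_eigenvalues
  have htr := hB.1.trace_eq_sum_eigenvalues
  simp only [RCLike.ofReal_real_eq_id, id] at hdet htr
  rw [hdet, htr, Real.log_prod fun i _ => (hB.eigenvalues_pos i).ne']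
  calc ∑ i, Real.log (hB.1.eigenvalues i)
      ≤ ∑ i, (hB.1.eigenvalues i - 1) :=
        Finset.sum_le_sum fun i _ => Real.log_le_sub_one_of_pos (hB.eigenvalues_pos i)
    _ = _ := by simp [Finset.sum_sub_distrib]

open scoped MatrixOrder Matrix.Norms.L2Operator in
lemma exists_sqrt_inv {Z : Matrix (Fin n) (Fin n) ℝ} (hZ : Z.PosDef) :
    ∃ R : Matrix (Fin n) (Fin n) ℝ, IsUnit R ∧ Z⁻¹ = Rᴴ * R := by
  obtain ⟨R, hR⟩ := CStarAlgebra.nonneg_iff_eq_star_mul_self.mp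
    (nonneg_iff_posSemidef.mpr hZ.inv.posSemidef)
  exact ⟨R, isUnit_of_mul_isUnit_right (hR ▸ hZ.inv.isUnit), hR⟩

lemma log_det_le_tangent {A Z : Matrix (Fin n) (Fin n) ℝ} (hA : A.PosDef) (hZ : Z.PosDef) :
    Real.log A.det ≤ Real.log Z.det + (Z⁻¹ * A).trace - n := by
  obtain ⟨R, hRu, hR⟩ := exists_sqrt_inv hZ
  have hB : (R * A * Rᴴ).PosDef :=
    hA.mul_mul_conjTranspose_same (vecMul_injective_of_isUnit hRu)
  have h := log_det_le_trace_sub hB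
  have hdet : (R * A * Rᴴ).det = Z.det⁻¹ * A.det := by
    have : Z⁻¹.det = Z.det⁻¹ := by rw [det_nonsing_inv, Ring.inverse_eq_inv']
    rw [← this, hR]
    simp only [det_mul]
    ring
  have htr : (R * A * Rᴴ).trace = (Z⁻¹ * A).trace := by
    rw [hR, trace_mul_comm, Matrix.mul_assoc]
  rw [hdet, htr, Real.log_mul (inv_ne_zero hZ.det_pos.ne') hA.det_pos.ne', Real.log_inv] at h
  linarith

lemma trace_inv_mul_nonneg {D Z : Matrix (Fin n) (Fin n) ℝ} (hD : D.PosSemidef)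
    (hZ : Z.PosDef) : 0 ≤ (Z⁻¹ * D).trace := by
  obtain ⟨R, -, hR⟩ := exists_sqrt_inv hZ
  have h := (hD.mul_mul_conjTranspose_same R).trace_nonneg
  rwa [trace_mul_comm, ← Matrix.mul_assoc, ← hR] at h

/-- Concavity and monotonicity of `log det` for the Loewner order, combined in one inequality. -/
lemma log_det_concave_aux {A B D Z : Matrix (Fin n) (Fin n) ℝ} (hA : A.PosDef) (hB : B.PosDef)
    (hZ : Z.PosDef) (hD : D.PosSemidef) {a b : ℝ} (ha : 0 ≤ a) (hb : 0 ≤ b) (hab : a + b = 1)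
    (h : Z = a • A + b • B + D) :
    a * Real.log A.det + b * Real.log B.det ≤ Real.log Z.det := by
  have h1 := mul_le_mul_of_nonneg_left (log_det_le_tangent hA hZ) ha
  have h2 := mul_le_mul_of_nonneg_left (log_det_le_tangent hB hZ) hb
  have h3 := trace_inv_mul_nonneg hD hZ
  have h4 : a * (Z⁻¹ * A).trace + b * (Z⁻¹ * B).trace + (Z⁻¹ * D).trace = n := by
    have hI : (Z⁻¹ * Z).trace = n := by
      rw [nonsing_inv_mul _ ((isUnit_iff_isUnit_det _).mp hZ.isUnit), trace_one, Fintype.card_fin]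
    rw [← hI]
    conv_rhs => rw [show Z⁻¹ * Z = Z⁻¹ * (a • A + b • B + D) from congrArg _ h]
    simp [Matrix.mul_add, trace_add, trace_smul]
  have hb' : b = 1 - a := by linarith
  subst hb'
  linarith

lemma schur_combo (W X₁ X₂ Y₁ Y₂ : Matrix (Fin n) (Fin n) ℝ) {a b : ℝ} (hab : a + b = 1) :
    (a • X₁ + b • X₂) - (a • Y₁ + b • Y₂)ᵀ * W * (a • Y₁ + b • Y₂) =
      a • (X₁ - Y₁ᵀ * W * Y₁) + b • (X₂ - Y₂ᵀ * W * Y₂)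
        + (a * b) • ((Y₁ - Y₂)ᵀ * W * (Y₁ - Y₂)) := by
  have hb : b = 1 - a := by linarith
  subst hb
  simp only [transpose_add, transpose_sub, transpose_smul, Matrix.add_mul, Matrix.mul_add,
    Matrix.sub_mul, Matrix.mul_sub, Matrix.smul_mul, Matrix.mul_smul]
  module

end

/-- joint convexity of the Lagrangian: with `Σ₀ ≻ 0` symmetric, `P`, `M`
symmetric, the Lagrangian
`L(X,Y) = -log det(X - Yᵀ Σ₀⁻¹ Y) + tr(P X) + tr(M (C X Cᵀ - Σ_T^y)) + 2 tr(Vᵀ Y) + c`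
is jointly convex in `(X, Y)` on `Q = {(X,Y) : X - Yᵀ Σ₀⁻¹ Y ≻ 0}`. -/
theorem lagrangian_convexOn {n p : ℕ} (Sigma0 P : Matrix (Fin n) (Fin n) ℝ)
    (hSigma0 : Sigma0.PosDef) (hP : P.IsSymm)
    (M : Matrix (Fin p) (Fin p) ℝ) (hM : M.IsSymm)
    (C : Matrix (Fin p) (Fin n) ℝ) (V : Matrix (Fin n) (Fin n) ℝ)
    (SigmaTy : Matrix (Fin p) (Fin p) ℝ) (c : ℝ) :
    ConvexOn ℝ
      {q : Matrix (Fin n) (Fin n) ℝ × Matrix (Fin n) (Fin n) ℝ |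
        (q.1 - q.2ᵀ * Sigma0⁻¹ * q.2).PosDef}
      (fun q => -Real.log (q.1 - q.2ᵀ * Sigma0⁻¹ * q.2).det
        + (P * q.1).trace + (M * (C * q.1 * Cᵀ - SigmaTy)).trace
        + 2 * (Vᵀ * q.2).trace + c) := by
  have hD (a b : ℝ) (ha : 0 ≤ a) (hb : 0 ≤ b) (Y₁ Y₂ : Matrix (Fin n) (Fin n) ℝ) :
      ((a * b) • ((Y₁ - Y₂)ᵀ * Sigma0⁻¹ * (Y₁ - Y₂))).PosSemidef := by
    have := hSigma0.inv.posSemidef.conjTranspose_mul_mul_same (Y₁ - Y₂)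
    rw [conjTranspose_eq_transpose_of_trivial] at this
    exact this.smul (mul_nonneg ha hb)
  have hconv : Convex ℝ {q : Matrix (Fin n) (Fin n) ℝ × Matrix (Fin n) (Fin n) ℝ |
      (q.1 - q.2ᵀ * Sigma0⁻¹ * q.2).PosDef} := by
    rw [convex_iff_forall_pos]
    rintro ⟨X₁, Y₁⟩ h₁ ⟨X₂, Y₂⟩ h₂ a b ha hb hab
    simp only [Set.mem_ofPred_eq, Prod.smul_mk, Prod.mk_add_mk] at h₁ h₂ ⊢
    rw [schur_combo _ _ _ _ _ hab]
    exact ((h₁.smul ha).add (h₂.smul hb)).add_posSemidef (hD a b ha.le hb.le Y₁ Y₂)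
  refine ⟨hconv, ?_⟩
  rintro ⟨X₁, Y₁⟩ h₁ ⟨X₂, Y₂⟩ h₂ a b ha hb hab
  have hZ := hconv h₁ h₂ ha hb hab
  simp only [Set.mem_ofPred_eq, Prod.smul_mk, Prod.mk_add_mk] at h₁ h₂ hZ ⊢
  have key := log_det_concave_aux h₁ h₂ hZ (hD a b ha hb Y₁ Y₂) ha hb hab
    (schur_combo _ _ _ _ _ hab)
  simp only [Matrix.mul_add, Matrix.add_mul, Matrix.mul_sub, Matrix.mul_smul, Matrix.smul_mul,
    trace_add, trace_sub, trace_smul, smul_eq_mul] at key ⊢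
  have hb' : b = 1 - a := by linarith
  subst hb'
  linarith
end

section
/- (Nonnegativity of the second variation of the Lagrangian) Let Σ₀ and Z be n×n real symmetric positive definite matrices, let Y and D be arbitrary n×n real matrices, and let W be an n×n real symmetric matrix. Then trace( ( Z⁻¹ (W − Yᵀ Σ₀⁻¹ D − Dᵀ Σ₀⁻¹ Y) )² ) + 2 · trace( Z⁻¹ Dᵀ Σ₀⁻¹ D ) ≥ 0. -/
/-!
Put `S = W - Yᵀ Σ₀⁻¹ D - Dᵀ Σ₀⁻¹ Y`. The second and third terms of `S` are transposes of each
other, so `S` is symmetric and the two summands are `tr (Z⁻¹ (Sᵀ Z⁻¹ S))` and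
`2 tr (Z⁻¹ (Dᵀ Σ₀⁻¹ D))`. In both, `Z⁻¹` is multiplied by a congruence transform of a positive
definite matrix, and the trace of a product of two positive semidefinite matrices is nonnegative.
-/

open Matrix

open scoped MatrixOrder Matrix.Norms.L2Operator in
/-- Writing `P = Bᴴ B`, the trace of `P Q` is the trace of the positive semidefinite matrix
`B Q Bᴴ`. -/
lemma trace_mul_nonneg_of_posSemidef {n : ℕ} {P Q : Matrix (Fin n) (Fin n) ℝ}
    (hP : P.PosSemidef) (hQ : Q.PosSemidef) : 0 ≤ (P * Q).trace := by
  obtain ⟨B, rfl⟩ := CStarAlgebra.nonneg_iff_eq_star_mul_self.mp hP.nonneg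
  rw [star_eq_conjTranspose, Matrix.mul_assoc, Matrix.trace_mul_comm]
  exact (hQ.mul_mul_conjTranspose_same B).trace_nonneg

/-- nonnegativity of the second variation of the Lagrangian: for `Σ₀ ≻ 0`,
`Z ≻ 0`, arbitrary `Y`, `D` and symmetric `W`,
`tr((Z⁻¹ (W - Yᵀ Σ₀⁻¹ D - Dᵀ Σ₀⁻¹ Y))²) + 2 tr(Z⁻¹ Dᵀ Σ₀⁻¹ D) ≥ 0`. -/
theorem second_variation_nonneg {n : ℕ} (Sigma0 Z : Matrix (Fin n) (Fin n) ℝ)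
    (hSigma0 : Sigma0.PosDef) (hZ : Z.PosDef)
    (Y D W : Matrix (Fin n) (Fin n) ℝ) (hW : W.IsSymm) :
    ((Z⁻¹ * (W - Yᵀ * Sigma0⁻¹ * D - Dᵀ * Sigma0⁻¹ * Y)) ^ 2).trace
      + 2 * (Z⁻¹ * (Dᵀ * Sigma0⁻¹ * D)).trace ≥ 0 := by
  have hSig : Sigma0⁻¹ᵀ = Sigma0⁻¹ := by
    simpa [conjTranspose_eq_transpose_of_trivial] using hSigma0.inv.isHermitian.eq
  set S := W - Yᵀ * Sigma0⁻¹ * D - Dᵀ * Sigma0⁻¹ * Y with hS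
  have hST : Sᵀ = S := by
    simp only [hS, transpose_sub, transpose_mul, transpose_transpose, hSig, hW.eq,
      Matrix.mul_assoc]
    abel
  have h1 : 0 ≤ ((Z⁻¹ * S) ^ 2).trace := by
    have h := trace_mul_nonneg_of_posSemidef hZ.inv.posSemidef
      (hZ.inv.posSemidef.conjTranspose_mul_mul_same S)
    rw [conjTranspose_eq_transpose_of_trivial, hST] at h
    simpa only [pow_two, Matrix.mul_assoc] using h
  have h2 : 0 ≤ (Z⁻¹ * (Dᵀ * Sigma0⁻¹ * D)).trace := by
    have h := trace_mul_nonneg_of_posSemidef hZ.inv.posSemidef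
      (hSigma0.inv.posSemidef.conjTranspose_mul_mul_same D)
    rwa [conjTranspose_eq_transpose_of_trivial] at h
  linarith
end

section
/- (First variation of the Lagrangian) Let Σ₀ be an n×n real symmetric positive definite matrix, P an n×n real symmetric matrix, M a p×p real symmetric matrix, C a p×n real matrix, V an n×n real matrix, Σ_T^y a p×p real matrix, c ∈ ℝ, and define L(X,Y) := −log det(X − Yᵀ Σ₀⁻¹ Y) + trace(P X) + trace(M (C X Cᵀ − Σ_T^y)) + 2 trace(Vᵀ Y) + c. Let (X,Y) be such that Z := X − Yᵀ Σ₀⁻¹ Y is positive definite, let δX be an n×n real symmetric matrix and δY an arbitrary n×n real matrix. Then the real function t ↦ L(X + t·δX, Y + t·δY) is differentiable at t = 0 with derivative trace( (P + Cᵀ M C − Z⁻¹) δX ) + 2 · trace( (V + Σ₀⁻¹ Y Z⁻¹)ᵀ δY ). -/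
/-!
Along the line `t ↦ (X + t δX, Y + t δY)` the matrix `Z` runs through a curve that is quadratic
in `t`, with velocity `N = δX - δYᵀ Σ₀⁻¹ Y - Yᵀ Σ₀⁻¹ δY` at `t = 0`. Jacobi's formula
(`hasDerivAt_det`) gives `(log det Z)' = tr (Z⁻¹ N)`, and since `Z⁻¹` and `Σ₀⁻¹` are symmetric both
`δY` terms of `N` contribute the same trace (`trace_inv_mul_velocity`). The other summands of the
Lagrangian are affine in `t`.
-/

open Matrix

/-- Jacobi's formula for an entrywise differentiable curve of matrices: `det` is a continuous
multilinear function of the rows, and replacing one row of `A t` by the same row of `A'` pairs that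
row with a column of the adjugate. -/
theorem hasDerivAt_det {n : ℕ} (A : ℝ → Matrix (Fin n) (Fin n) ℝ) (A' : Matrix (Fin n) (Fin n) ℝ)
    (t : ℝ) (h : ∀ i j, HasDerivAt (fun s => A s i j) (A' i j) t) :
    HasDerivAt (fun s => (A s).det) ((A t).adjugate * A').trace t := by
  let D : ContinuousMultilinearMap ℝ (fun _ : Fin n => Fin n → ℝ) ℝ :=
    { toMultilinearMap := (detRowAlternating (R := ℝ) (n := Fin n)).toMultilinearMap
      cont := Continuous.matrix_det (A := fun M : Matrix (Fin n) (Fin n) ℝ => M) continuous_id }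
  have hA : HasDerivAt (F := Fin n → Fin n → ℝ) (fun s => (fun i j => A s i j))
      (fun i j => A' i j) t :=
    hasDerivAt_pi.2 fun i => hasDerivAt_pi.2 fun j => h i j
  have hD := (D.hasFDerivAt (fun i j => A t i j)).comp_hasDerivAt t hA
  refine HasDerivAt.congr_deriv hD ?_
  rw [ContinuousMultilinearMap.linearDeriv_apply, trace_mul_comm]
  refine Finset.sum_congr rfl fun i _ => ?_
  change ((A t).updateRow i (A' i)).det = _
  rw [← cramer_transpose_apply, cramer_eq_adjugate_mulVec, ← adjugate_transpose]
  simp [mulVec, dotProduct, mul_apply, mul_comm]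

/-- The pairing of the velocity of `X - Yᵀ S Y` with a symmetric `W`, applied with `W = Z⁻¹`: the two
`dY` terms are transposes of each other up to cyclic permutation. -/
theorem trace_inv_mul_velocity {n : ℕ} (S W Y dX dY : Matrix (Fin n) (Fin n) ℝ)
    (hS : Sᵀ = S) (hW : Wᵀ = W) :
    (W * (dX - dYᵀ * S * Y - Yᵀ * S * dY)).trace
      = (W * dX).trace - 2 * ((S * Y * W)ᵀ * dY).trace := by
  have h : (W * (dYᵀ * S * Y)).trace = (W * (Yᵀ * S * dY)).trace := by
    rw [← trace_transpose, trace_mul_comm W]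
    simp [transpose_mul, hS, hW, Matrix.mul_assoc]
  rw [Matrix.mul_sub, Matrix.mul_sub, trace_sub, trace_sub, h]
  simp only [transpose_mul, hS, hW, Matrix.mul_assoc]
  ring

/-- A linear functional is differentiable along an affine line. -/
theorem hasDerivAt_linear_line {E : Type*} [AddCommGroup E] [Module ℝ E] (f : E →ₗ[ℝ] ℝ)
    (a b : E) (t : ℝ) : HasDerivAt (fun s : ℝ => f (a + s • b)) (f b) t := by
  simpa using ((hasDerivAt_id t).mul_const (f b)).const_add (f a)

/-- first variation of the Lagrangian: with
`L(X,Y) = -log det(X - Yᵀ Σ₀⁻¹ Y) + tr(P X) + tr(M (C X Cᵀ - Σ_T^y)) + 2 tr(Vᵀ Y) + c`,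
if `Z := X - Yᵀ Σ₀⁻¹ Y ≻ 0`, `δX` symmetric and `δY` arbitrary, then
`t ↦ L(X + t δX, Y + t δY)` is differentiable at `t = 0` with derivative
`tr((P + Cᵀ M C - Z⁻¹) δX) + 2 tr((V + Σ₀⁻¹ Y Z⁻¹)ᵀ δY)`. -/
theorem lagrangian_first_variation {n p : ℕ} (Sigma0 P : Matrix (Fin n) (Fin n) ℝ)
    (hSigma0 : Sigma0.PosDef) (hP : P.IsSymm)
    (M : Matrix (Fin p) (Fin p) ℝ) (hM : M.IsSymm)
    (C : Matrix (Fin p) (Fin n) ℝ) (V : Matrix (Fin n) (Fin n) ℝ)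
    (SigmaTy : Matrix (Fin p) (Fin p) ℝ) (c : ℝ)
    (X Y : Matrix (Fin n) (Fin n) ℝ) (hZ : (X - Yᵀ * Sigma0⁻¹ * Y).PosDef)
    (dX dY : Matrix (Fin n) (Fin n) ℝ) (hdX : dX.IsSymm) :
    HasDerivAt
      (fun t : ℝ =>
        -Real.log ((X + t • dX) - (Y + t • dY)ᵀ * Sigma0⁻¹ * (Y + t • dY)).det
          + (P * (X + t • dX)).trace
          + (M * (C * (X + t • dX) * Cᵀ - SigmaTy)).trace
          + 2 * (Vᵀ * (Y + t • dY)).trace + c)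
      (((P + Cᵀ * M * C - (X - Yᵀ * Sigma0⁻¹ * Y)⁻¹) * dX).trace
        + 2 * (((V + Sigma0⁻¹ * Y * (X - Yᵀ * Sigma0⁻¹ * Y)⁻¹)ᵀ) * dY).trace)
      0 := by
  have hS : (Sigma0⁻¹)ᵀ = Sigma0⁻¹ := by
    simpa [IsHermitian, conjTranspose_eq_transpose_of_trivial] using hSigma0.isHermitian.inv
  have hZi : ((X - Yᵀ * Sigma0⁻¹ * Y)⁻¹)ᵀ = (X - Yᵀ * Sigma0⁻¹ * Y)⁻¹ := by
    simpa only [IsHermitian, conjTranspose_eq_transpose_of_trivial] using hZ.isHermitian.inv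
  have hvel := trace_inv_mul_velocity Sigma0⁻¹ _ Y dX dY hS hZi
  generalize Sigma0⁻¹ = S at *
  have hdet := hZ.det_pos
  have hcurve : ∀ t : ℝ, (X + t • dX) - (Y + t • dY)ᵀ * S * (Y + t • dY)
      = (X - Yᵀ * S * Y) + t • (dX - dYᵀ * S * Y - Yᵀ * S * dY)
        + t ^ 2 • -(dYᵀ * S * dY) := by
    intro t
    simp only [transpose_add, transpose_smul, Matrix.add_mul, Matrix.mul_add, Matrix.smul_mul,
      Matrix.mul_smul]
    module
  have hJ := hasDerivAt_det (fun t : ℝ => (X + t • dX) - (Y + t • dY)ᵀ * S * (Y + t • dY))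
    (dX - dYᵀ * S * Y - Yᵀ * S * dY) 0 (by
      intro i j
      -- only the linear coefficient of the quadratic curve survives at `t = 0`
      simp only [hcurve]
      generalize X - Yᵀ * S * Y = A
      generalize dX - dYᵀ * S * Y - Yᵀ * S * dY = B
      generalize -(dYᵀ * S * dY) = R
      simpa using (((hasDerivAt_id (0 : ℝ)).mul_const (B i j)).const_add (A i j)).fun_add
        (((hasDerivAt_id (0 : ℝ)).pow 2).mul_const (R i j)))
  have hlog := (hJ.log (by simpa using hdet.ne')).neg
  have h1 := hasDerivAt_linear_line
    (traceLinearMap (Fin n) ℝ ℝ ∘ₗ LinearMap.mulLeft ℝ P) X dX 0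
  have h2 := (hasDerivAt_linear_line
    (traceLinearMap (Fin n) ℝ ℝ ∘ₗ LinearMap.mulLeft ℝ (Cᵀ * M * C)) X dX 0).sub_const
      (M * SigmaTy).trace
  have h3 := (hasDerivAt_linear_line
    (traceLinearMap (Fin n) ℝ ℝ ∘ₗ LinearMap.mulLeft ℝ Vᵀ) Y dY 0).const_mul 2
  -- cyclicity of the trace puts the observation term in the same affine form as `tr (P X)`
  have hobs : ∀ W : Matrix (Fin n) (Fin n) ℝ,
      (M * (C * W * Cᵀ - SigmaTy)).trace = (Cᵀ * M * C * W).trace - (M * SigmaTy).trace := by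
    intro W
    rw [Matrix.mul_sub, trace_sub, ← Matrix.mul_assoc, trace_mul_comm _ Cᵀ]
    simp only [Matrix.mul_assoc]
  simp only [LinearMap.comp_apply, LinearMap.mulLeft_apply, traceLinearMap_apply] at h1 h2 h3
  simp only [hobs]
  refine ((((hlog.add h1).add h2).add h3).add_const c).congr_deriv ?_
  have hadj : ((X - Yᵀ * S * Y).adjugate * (dX - dYᵀ * S * Y - Yᵀ * S * dY)).trace
      / (X - Yᵀ * S * Y).det
      = ((X - Yᵀ * S * Y)⁻¹ * (dX - dYᵀ * S * Y - Yᵀ * S * dY)).trace := by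
    rw [Matrix.inv_def, Ring.inverse_eq_inv', Matrix.smul_mul, trace_smul, smul_eq_mul,
      div_eq_inv_mul]
  simp only [zero_smul, add_zero]
  rw [hadj, hvel]
  simp only [transpose_add, Matrix.add_mul, Matrix.sub_mul, trace_add, trace_sub]
  ring
end

section
/- (Solutions of the quadratic matrix equation) Let A and Σ be p×p real symmetric positive definite matrices. Let A^{1/2} denote the unique symmetric positive definite square root of A, A^{−1/2} its inverse, and let W := ((1/4)I + A^{1/2} Σ A^{1/2})^{1/2} be the unique symmetric positive definite square root of (1/4)I + A^{1/2} Σ A^{1/2}. Then both Z⁺ := A^{−1/2}(W − (1/2)I)A^{−1/2} and Z⁻ := A^{−1/2}(−W − (1/2)I)A^{−1/2} are symmetric and satisfy the quadratic matrix equation Z + Z A Z = Σ. -/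
/-! With `Q = A^{1/2}` and `V = ±W`, put `X = V - (1/2) I`. Completing the square gives
`X + X * X = V * V - (1/4) I = Q * S * Q`. For `Z = Q⁻¹ * X * Q⁻¹`, the relation `Q * Q = A`
gives `Z + Z * A * Z = Q⁻¹ * (X + X * X) * Q⁻¹`, which is therefore `S`. The
identity `V * V = (1/4) I + Q * S * Q` and the symmetry of `V` are the same for `V = W` and
`V = -W`, so `quadratic_solution_of_sq` covers both signs. -/

open Matrix

/-- Any symmetric square root `V` of `(1/4) I + Q * S * Q`, positive definite or not, yields a
symmetric solution `Q⁻¹ * (V - (1/2) I) * Q⁻¹` of `Z + Z * (Q * Q) * Z = S`. -/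
theorem quadratic_solution_of_sq {p : ℕ} {S Q V : Matrix (Fin p) (Fin p) ℝ}
    (hQ : Q.IsSymm) (hdet : IsUnit Q.det) (hV : V.IsSymm)
    (hV2 : V * V = (1 / 4 : ℝ) • 1 + Q * S * Q) :
    (Q⁻¹ * (V - (1 / 2 : ℝ) • 1) * Q⁻¹).IsSymm ∧
      Q⁻¹ * (V - (1 / 2 : ℝ) • 1) * Q⁻¹
        + Q⁻¹ * (V - (1 / 2 : ℝ) • 1) * Q⁻¹ * (Q * Q)
          * (Q⁻¹ * (V - (1 / 2 : ℝ) • 1) * Q⁻¹) = S := by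
  have h1 : Q⁻¹ * Q = 1 := nonsing_inv_mul Q hdet
  have h2 : Q * Q⁻¹ = 1 := mul_nonsing_inv Q hdet
  constructor
  · simp [Matrix.IsSymm, transpose_mul, transpose_nonsing_inv, hQ.eq, hV.eq, Matrix.mul_assoc]
  · have hX : (V - (1 / 2 : ℝ) • 1) + (V - (1 / 2 : ℝ) • 1) * (V - (1 / 2 : ℝ) • 1)
        = Q * S * Q := by
      simp only [sub_mul, mul_sub, hV2, smul_mul_assoc, mul_smul_comm, one_mul, mul_one]
      module
    generalize V - (1 / 2 : ℝ) • 1 = X at hX ⊢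
    calc Q⁻¹ * X * Q⁻¹ + Q⁻¹ * X * Q⁻¹ * (Q * Q) * (Q⁻¹ * X * Q⁻¹)
        = Q⁻¹ * X * Q⁻¹ + Q⁻¹ * X * (Q⁻¹ * Q) * (Q * Q⁻¹) * X * Q⁻¹ := by noncomm_ring
      _ = Q⁻¹ * (X + X * X) * Q⁻¹ := by rw [h1, h2]; noncomm_ring
      _ = (Q⁻¹ * Q) * S * (Q * Q⁻¹) := by rw [hX]; noncomm_ring
      _ = S := by rw [h1, h2, one_mul, mul_one]

/-- solutions of the quadratic matrix equation: let `A, Σ ≻ 0`, let `sqA` be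
the (unique) symmetric positive definite square root of `A` and `W` the (unique) symmetric
positive definite square root of `(1/4) I + A^{1/2} Σ A^{1/2}`.  Then both
`Z⁺ = A^{-1/2}(W - (1/2) I)A^{-1/2}` and `Z⁻ = A^{-1/2}(-W - (1/2) I)A^{-1/2}` are symmetric
and satisfy `Z + Z A Z = Σ`. -/
theorem quadratic_equation_solutions {p : ℕ} (A S : Matrix (Fin p) (Fin p) ℝ)
    (hA : A.PosDef) (hS : S.PosDef)
    (sqA : Matrix (Fin p) (Fin p) ℝ) (hsqA : sqA.PosDef) (hsqA2 : sqA * sqA = A)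
    (W : Matrix (Fin p) (Fin p) ℝ) (hW : W.PosDef)
    (hW2 : W * W = (1 / 4 : ℝ) • 1 + sqA * S * sqA) :
    ((sqA⁻¹ * (W - (1 / 2 : ℝ) • 1) * sqA⁻¹).IsSymm ∧
        sqA⁻¹ * (W - (1 / 2 : ℝ) • 1) * sqA⁻¹
          + sqA⁻¹ * (W - (1 / 2 : ℝ) • 1) * sqA⁻¹ * A
            * (sqA⁻¹ * (W - (1 / 2 : ℝ) • 1) * sqA⁻¹) = S) ∧
      ((sqA⁻¹ * (-W - (1 / 2 : ℝ) • 1) * sqA⁻¹).IsSymm ∧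
        sqA⁻¹ * (-W - (1 / 2 : ℝ) • 1) * sqA⁻¹
          + sqA⁻¹ * (-W - (1 / 2 : ℝ) • 1) * sqA⁻¹ * A
            * (sqA⁻¹ * (-W - (1 / 2 : ℝ) • 1) * sqA⁻¹) = S) := by
  subst hsqA2
  have hQ : sqA.IsSymm := by simpa using hsqA.isHermitian
  have hWs : W.IsSymm := by simpa using hW.isHermitian
  have hdet : IsUnit sqA.det := hsqA.det_pos.ne'.isUnit
  exact ⟨quadratic_solution_of_sq hQ hdet hWs hW2,
    quadratic_solution_of_sq hQ hdet hWs.neg (by rw [neg_mul_neg, hW2])⟩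
end

section
/- (Signs of the two solutions) Let A and Σ be p×p real symmetric positive definite matrices, W := ((1/4)I + A^{1/2} Σ A^{1/2})^{1/2} the symmetric positive definite square root, Z⁺ := A^{−1/2}(W − (1/2)I)A^{−1/2} and Z⁻ := A^{−1/2}(−W − (1/2)I)A^{−1/2}. Then Z⁺ is positive definite and Z⁻ is negative definite. -/
/-!
Put `M = A^{1/2} Σ A^{1/2}`, which is positive definite, so that `W² = 1/4 + M`. If `v ≠ 0` is an
eigenvector of the symmetric matrix `W - 1/2` with eigenvalue `μ`, then `W v = (μ + 1/2) v`, hence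
`(μ + 1/2) |v|² = vᵀ W v > 0` and `((μ + 1/2)² - 1/4) |v|² = vᵀ M v > 0`. These force `μ > 0`, so
`W - 1/2` is positive definite; `W + 1/2` is so trivially. Conjugation by the invertible symmetric
matrix `A^{-1/2}` preserves positive definiteness.
-/

open Matrix

theorem posDef_sub_half_of_sq_eq {p : ℕ} {W M : Matrix (Fin p) (Fin p) ℝ}
    (hW : W.PosDef) (hM : M.PosDef) (h : W * W = (1 / 4 : ℝ) • 1 + M) :
    (W - (1 / 2 : ℝ) • 1).PosDef := by
  have hD : (W - (1 / 2 : ℝ) • 1).IsHermitian :=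
    hW.isHermitian.sub (by simp [Matrix.IsHermitian])
  rw [hD.posDef_iff_eigenvalues_pos]
  intro i
  set μ := hD.eigenvalues i
  set v : Fin p → ℝ := (hD.eigenvectorBasis i).ofLp with hv
  have hv0 : v ≠ 0 := by
    intro h0
    apply hD.eigenvectorBasis.orthonormal.ne_zero i
    ext j
    exact congrFun h0 j
  have hDv : (W - (1 / 2 : ℝ) • 1) *ᵥ v = μ • v := hD.mulVec_eigenvectorBasis i
  have hWv : W *ᵥ v = (μ + 1 / 2) • v := by
    rw [sub_mulVec, smul_mulVec, one_mulVec, sub_eq_iff_eq_add] at hDv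
    rw [hDv, add_smul]
  have hMv : M *ᵥ v = ((μ + 1 / 2) ^ 2 - 1 / 4) • v := by
    have h2 := congrArg (· *ᵥ v) h
    simp only [← mulVec_mulVec, hWv, mulVec_smul, add_mulVec, smul_mulVec, one_mulVec] at h2
    rw [sub_smul, eq_sub_iff_add_eq', ← h2, smul_smul, sq]
  have h1 := hW.dotProduct_mulVec_pos hv0
  have h2 := hM.dotProduct_mulVec_pos hv0
  have h3 : 0 ≤ star v ⬝ᵥ v := dotProduct_star_self_nonneg v
  rw [hWv, dotProduct_smul, smul_eq_mul] at h1
  rw [hMv, dotProduct_smul, smul_eq_mul] at h2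
  have h4 := pos_of_mul_pos_left h1 h3
  have h5 := pos_of_mul_pos_left h2 h3
  nlinarith

/-- signs of the two solutions: with `A, Σ ≻ 0`, `sqA` the symmetric positive
definite square root of `A`, and `W` the symmetric positive definite square root of
`(1/4) I + A^{1/2} Σ A^{1/2}`, the solution `Z⁺ = A^{-1/2}(W - (1/2) I)A^{-1/2}` is positive
definite and `Z⁻ = A^{-1/2}(-W - (1/2) I)A^{-1/2}` is negative definite. -/
theorem quadratic_equation_solution_signs {p : ℕ} (A S : Matrix (Fin p) (Fin p) ℝ)
    (hA : A.PosDef) (hS : S.PosDef)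
    (sqA : Matrix (Fin p) (Fin p) ℝ) (hsqA : sqA.PosDef) (hsqA2 : sqA * sqA = A)
    (W : Matrix (Fin p) (Fin p) ℝ) (hW : W.PosDef)
    (hW2 : W * W = (1 / 4 : ℝ) • 1 + sqA * S * sqA) :
    (sqA⁻¹ * (W - (1 / 2 : ℝ) • 1) * sqA⁻¹).PosDef ∧
      (-(sqA⁻¹ * (-W - (1 / 2 : ℝ) • 1) * sqA⁻¹)).PosDef := by
  have conj {Q N : Matrix (Fin p) (Fin p) ℝ} (hQ : Q.PosDef) (hN : N.PosDef) :
      (Q * N * Q).PosDef := by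
    have := (Matrix.IsUnit.posDef_star_left_conjugate_iff (x := N) hQ.isUnit).2 hN
    rwa [star_eq_conjTranspose, hQ.isHermitian.eq] at this
  refine ⟨conj hsqA.inv (posDef_sub_half_of_sq_eq hW (conj hsqA hS) hW2), ?_⟩
  have hsum : (W + (1 / 2 : ℝ) • 1).PosDef := hW.add (PosDef.one.smul (by norm_num))
  have hneg : -(sqA⁻¹ * (-W - (1 / 2 : ℝ) • 1) * sqA⁻¹) =
      sqA⁻¹ * (W + (1 / 2 : ℝ) • 1) * sqA⁻¹ := by
    rw [← neg_mul, ← mul_neg, neg_sub, sub_neg_eq_add, add_comm]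
  rw [hneg]
  exact conj hsqA.inv hsum
end

section
/- (Uniqueness of the positive definite solution of the quadratic matrix equation) Let A and Σ be p×p real symmetric positive definite matrices. If Z is a p×p real symmetric positive definite matrix satisfying Z + Z A Z = Σ, then Z = A^{−1/2}( ((1/4)I + A^{1/2} Σ A^{1/2})^{1/2} − (1/2)I )A^{−1/2}. In other words, Z⁺ is the unique symmetric positive definite solution of Z + ZAZ = Σ. -/
/-!
Conjugating `Z + Z A Z = Σ` by `A^{1/2}` and completing the square gives
`(A^{1/2} Z A^{1/2} + I/2)² = I/4 + A^{1/2} Σ A^{1/2}`. The matrix being squared is positive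
definite, so by uniqueness of positive square roots (`Matrix.PosDef.eq_of_mul_self_eq`) it is `W`,
and `Z` is recovered by cancelling `A^{1/2}` on both sides.
-/

open Matrix

open scoped MatrixOrder in
/-- Uniqueness of the positive square root, obtained from the continuous functional calculus. -/
theorem Matrix.PosDef.eq_of_mul_self_eq {p : ℕ} {X Y : Matrix (Fin p) (Fin p) ℝ}
    (hX : X.PosDef) (hY : Y.PosDef) (h : X * X = Y * Y) : X = Y := by
  rw [← CFC.sqrt_mul_self X hX.posSemidef.nonneg, h, CFC.sqrt_mul_self Y hY.posSemidef.nonneg]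

/-- uniqueness of the positive definite solution: with `A, Σ ≻ 0`, `sqA` the
symmetric positive definite square root of `A` and `W` the symmetric positive definite square
root of `(1/4) I + A^{1/2} Σ A^{1/2}`, any symmetric positive definite solution `Z` of
`Z + Z A Z = Σ` equals `A^{-1/2}(W - (1/2) I)A^{-1/2}`. -/
theorem quadratic_equation_posdef_unique {p : ℕ} (A S : Matrix (Fin p) (Fin p) ℝ)
    (hA : A.PosDef) (hS : S.PosDef)
    (sqA : Matrix (Fin p) (Fin p) ℝ) (hsqA : sqA.PosDef) (hsqA2 : sqA * sqA = A)
    (W : Matrix (Fin p) (Fin p) ℝ) (hW : W.PosDef)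
    (hW2 : W * W = (1 / 4 : ℝ) • 1 + sqA * S * sqA)
    (Z : Matrix (Fin p) (Fin p) ℝ) (hZ : Z.PosDef) (hZeq : Z + Z * A * Z = S) :
    Z = sqA⁻¹ * (W - (1 / 2 : ℝ) • 1) * sqA⁻¹ := by
  have hdet : IsUnit sqA.det := (Matrix.isUnit_iff_isUnit_det _).mp hsqA.isUnit
  have hconj : (sqA * Z * sqA).PosSemidef := by
    have h := hZ.posSemidef.mul_mul_conjTranspose_same sqA
    rwa [hsqA.isHermitian.eq] at h
  have hY : (sqA * Z * sqA + (1 / 2 : ℝ) • 1).PosDef :=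
    Matrix.PosDef.posSemidef_add hconj (Matrix.PosDef.one.smul (by norm_num))
  have hYW : sqA * Z * sqA + (1 / 2 : ℝ) • 1 = W := by
    refine hY.eq_of_mul_self_eq hW ?_
    rw [hW2, ← hZeq, ← hsqA2]
    simp only [mul_add, add_mul, smul_mul_assoc, mul_smul_comm, one_mul, mul_one,
      mul_assoc]
    module
  rw [← hYW, add_sub_cancel_right, mul_assoc sqA, Matrix.nonsing_inv_mul_cancel_left _ _ hdet,
    Matrix.mul_nonsing_inv_cancel_right _ _ hdet]
end

section
/- (Positive definiteness of the constructed Z) Let n = p + q, let P be an n×n real symmetric matrix with blocks P₁₁, P₁₂, P₂₁ = P₁₂ᵀ, P₂₂ where P₂₂ is symmetric positive definite, and let Z₁₁ be a p×p real symmetric positive definite matrix. Define Z₂₁ := −P₂₂⁻¹ P₂₁ Z₁₁, Z₁₂ := Z₂₁ᵀ, and Z₂₂ := P₂₂⁻¹ − Z₂₁ P₁₂ P₂₂⁻¹. Then the n×n block matrix Z := [[Z₁₁, Z₁₂],[Z₂₁, Z₂₂]] is symmetric positive definite. -/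
open Matrix

/-!
With `K = P₂₂⁻¹ P₁₂ᵀ`, symmetry of `P₂₂` gives `Kᵀ = P₁₂ P₂₂⁻¹`, so the constructed matrix is the
congruence `Z = L * diag(Z₁₁, P₂₂⁻¹) * Lᵀ` by the unit lower triangular matrix
`L = [[1, 0], [-K, 1]]`. The middle factor is positive definite (`posDef_fromBlocks_diag`), and
congruence by an invertible matrix preserves positive definiteness.
-/

theorem posDef_fromBlocks_diag {p q : ℕ} {A : Matrix (Fin p) (Fin p) ℝ}
    {D : Matrix (Fin q) (Fin q) ℝ} (hA : A.PosDef) (hD : D.PosDef) :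
    (fromBlocks A 0 0 D).PosDef := by
  refine .of_dotProduct_mulVec_pos (hA.1.fromBlocks (by simp) hD.1) fun x hx => ?_
  obtain ⟨u, v, rfl⟩ : ∃ u v, x = Sum.elim u v :=
    ⟨x ∘ Sum.inl, x ∘ Sum.inr, (Sum.elim_comp_inl_inr x).symm⟩
  have hu := hA.posSemidef.dotProduct_mulVec_nonneg u
  have hv := hD.posSemidef.dotProduct_mulVec_nonneg v
  simp only [star_trivial] at hu hv
  simp only [star_trivial, fromBlocks_mulVec, Sum.elim_comp_inl, Sum.elim_comp_inr, zero_mulVec,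
    add_zero, zero_add, sumElim_dotProduct_sumElim]
  by_cases h : u = 0
  · have hv0 : v ≠ 0 := by
      rintro rfl
      subst h
      exact hx (by ext i; cases i <;> rfl)
    have := hD.dotProduct_mulVec_pos hv0
    simp only [star_trivial] at this
    linarith
  · have := hA.dotProduct_mulVec_pos h
    simp only [star_trivial] at this
    linarith

/-- positive definiteness of the constructed `Z`: with `P` symmetric
(`P₂₁ = P₁₂ᵀ`), `P₂₂ ≻ 0` and `Z₁₁ ≻ 0`, setting `Z₂₁ := -P₂₂⁻¹ P₂₁ Z₁₁`, `Z₁₂ := Z₂₁ᵀ`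
and `Z₂₂ := P₂₂⁻¹ - Z₂₁ P₁₂ P₂₂⁻¹`, the block matrix `Z = [[Z₁₁, Z₁₂], [Z₂₁, Z₂₂]]` is
symmetric positive definite. -/
theorem constructed_Z_posDef {p q : ℕ}
    (P11 : Matrix (Fin p) (Fin p) ℝ) (P12 : Matrix (Fin p) (Fin q) ℝ)
    (P22 : Matrix (Fin q) (Fin q) ℝ)
    (hP11 : P11.IsSymm) (hP22 : P22.PosDef)
    (Z11 : Matrix (Fin p) (Fin p) ℝ) (hZ11 : Z11.PosDef) :
    (fromBlocks Z11 (-(P22⁻¹ * P12ᵀ * Z11))ᵀ (-(P22⁻¹ * P12ᵀ * Z11))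
      (P22⁻¹ - -(P22⁻¹ * P12ᵀ * Z11) * P12 * P22⁻¹)).PosDef := by
  have hinv : (P22⁻¹)ᵀ = P22⁻¹ := hP22.inv.1
  have hZ : Z11ᵀ = Z11 := hZ11.1
  have hL : IsUnit (fromBlocks 1 0 (-(P22⁻¹ * P12ᵀ)) 1 :
      Matrix (Fin p ⊕ Fin q) (Fin p ⊕ Fin q) ℝ) := by
    simp [isUnit_iff_isUnit_det]
  convert hL.posDef_star_right_conjugate_iff.mpr (posDef_fromBlocks_diag hZ11 hP22.inv) using 1
  simp [star_eq_conjTranspose, fromBlocks_transpose, fromBlocks_multiply,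
    conjTranspose_eq_transpose_of_trivial, transpose_mul, hinv, hZ, Matrix.mul_assoc, add_comm]
end

section
/- (KKT sufficiency for the covariance selection problem) Let Σ₀ be an n×n real symmetric positive definite matrix, S a 2n×2n real symmetric positive definite matrix with S⁻¹ = [[N, V],[Vᵀ, P]] in n×n blocks, C a p×n real matrix, and Σ_T^y a p×p real symmetric matrix. For pairs (X,Y) of n×n real matrices, let Q := {(X,Y) : X − Yᵀ Σ₀⁻¹ Y is positive definite}, let Σ(X,Y) := [[Σ₀, Y],[Yᵀ, X]] (a 2n×2n block matrix), and let f(X,Y) := −log det Σ(X,Y) + trace(S⁻¹ Σ(X,Y)). Suppose (X*,Y*) ∈ Q satisfies the constraint C X* Cᵀ = Σ_T^y, and suppose there exists a p×p real symmetric matrix M such that, with Z* := X* − (Y*)ᵀ Σ₀⁻¹ Y*, the stationarity conditions P + Cᵀ M C = (Z*)⁻¹ and V + Σ₀⁻¹ Y* (Z*)⁻¹ = 0 hold. Then f(X*,Y*) ≤ f(X,Y) for every (X,Y) ∈ Q with C X Cᵀ = Σ_T^y. -/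
/-!
The function `-log det` is convex on positive definite matrices and its gradient at `G` is `-G⁻¹`,
so its graph lies above its tangent planes (`log_det_le_tangent`). Hence the increment of the
objective from `G = [[Σ₀, Y*], [Y*ᵀ, X*]]` to another feasible `H = [[Σ₀, Y], [Yᵀ, X]]` is at least
`tr ((S⁻¹ - G⁻¹) (H - G))`, and this first-order term is zero. Indeed the stationarity conditions
say that `S⁻¹` and `G⁻¹` have the same off-diagonal blocks, while their lower right blocks differ
by `Cᵀ M C` (`inv_fromBlocks_schur`). The upper left block of `H - G` is zero, so only
`tr (Cᵀ M C (X - X*)) = tr (M (C X Cᵀ - C X* Cᵀ))` remains, which is zero because both points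
satisfy the linear constraint.
-/

open Matrix

/-- A positive definite matrix satisfies `log det T ≤ tr (T - 1)`: this is `log t ≤ t - 1`
summed over the eigenvalues. -/
lemma log_det_le_trace_sub_s12 {m : Type*} [Fintype m] [DecidableEq m]
    {T : Matrix m m ℝ} (hT : T.PosDef) : Real.log T.det ≤ (T - 1).trace := by
  have hdet : T.det = ∏ i, hT.1.eigenvalues i := by
    simpa using hT.1.det_eq_prod_eigenvalues
  have htr : T.trace = ∑ i, hT.1.eigenvalues i := by
    simpa using hT.1.trace_eq_sum_eigenvalues
  have hone : (1 : Matrix m m ℝ).trace = ∑ _i : m, (1 : ℝ) := by simp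
  rw [trace_sub, hdet, htr, hone, Real.log_prod fun i _ => (hT.eigenvalues_pos i).ne',
    ← Finset.sum_sub_distrib]
  exact Finset.sum_le_sum fun i _ => Real.log_le_sub_one_of_pos (hT.eigenvalues_pos i)

/-- The concave function `log det` lies below its tangent plane at `G`. With `G⁻¹ = Bᴴ B` this is
`log_det_le_trace_sub` for the congruent matrix `B H Bᴴ`, which has the determinant and the
trace of `G⁻¹ H`. -/
lemma log_det_le_tangent_s12 {m : Type*} [Fintype m] [DecidableEq m]
    {G H : Matrix m m ℝ} (hG : G.PosDef) (hH : H.PosDef) :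
    Real.log H.det ≤ Real.log G.det + (G⁻¹ * (H - G)).trace := by
  obtain ⟨B, hBu, hB⟩ : ∃ B : Matrix m m ℝ, IsUnit B ∧ G⁻¹ = Bᴴ * B := by
    open scoped MatrixOrder in
    obtain ⟨B, hB⟩ := CStarAlgebra.nonneg_iff_eq_star_mul_self.mp hG.inv.posSemidef.nonneg
    refine ⟨B, ?_, hB⟩
    have h := hG.inv.isUnit
    rw [hB, isUnit_iff_isUnit_det, det_mul] at h
    exact (isUnit_iff_isUnit_det B).mpr (isUnit_of_mul_isUnit_right h)
  have hT : (B * H * Bᴴ).PosDef := (hBu.posDef_star_right_conjugate_iff).mpr hH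
  have hdet : (B * H * Bᴴ).det = G.det⁻¹ * H.det := by
    have h : G.det⁻¹ = Bᴴ.det * B.det := by
      rw [← det_mul, ← hB, det_nonsing_inv, Ring.inverse_eq_inv']
    rw [h, det_mul, det_mul]
    ring
  have htr : (B * H * Bᴴ - 1).trace = (G⁻¹ * (H - G)).trace := by
    rw [Matrix.mul_sub, nonsing_inv_mul _ ((isUnit_iff_isUnit_det G).mp hG.isUnit), trace_sub,
      trace_sub, hB, Matrix.mul_assoc, trace_mul_comm, Matrix.mul_assoc, trace_mul_comm]
  have key := log_det_le_trace_sub_s12 hT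
  rw [hdet, htr, Real.log_mul (inv_ne_zero hG.det_pos.ne') hH.det_pos.ne', Real.log_inv] at key
  linarith

/-- Schur complement criterion for positive definiteness of a block matrix. -/
lemma posDef_fromBlocks_of_schur {m : Type*} [Fintype m] [DecidableEq m]
    {A X Y : Matrix m m ℝ} (hA : A.PosDef) (hZ : (X - Yᵀ * A⁻¹ * Y).PosDef) :
    (fromBlocks A Y Yᵀ X).PosDef := by
  let : Invertible A := hA.isUnit.invertible
  have hpsd : (fromBlocks A Y Yᵀ X).PosSemidef := by
    have h := (PosDef.fromBlocks₁₁ Y X hA).mpr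
    rw [conjTranspose_eq_transpose_of_trivial] at h
    exact h hZ.posSemidef
  rw [hpsd.posDef_iff_det_ne_zero, det_fromBlocks₁₁, invOf_eq_nonsing_inv]
  exact mul_ne_zero hA.det_pos.ne' hZ.det_pos.ne'

lemma fromBlocks_sub_fromBlocks {m : Type*} (A B C D A' B' C' D' : Matrix m m ℝ) :
    fromBlocks A B C D - fromBlocks A' B' C' D' =
      fromBlocks (A - A') (B - B') (C - C') (D - D') := by
  simp only [sub_eq_add_neg, fromBlocks_neg, fromBlocks_add]

lemma trace_fromBlocks_eq_add {m : Type*} [Fintype m] (A B C D : Matrix m m ℝ) :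
    (fromBlocks A B C D).trace = A.trace + D.trace := by
  simp [trace]

/-- Block inverse in terms of the inverse `W` of the Schur complement. -/
lemma inv_fromBlocks_schur {m : Type*} [Fintype m] [DecidableEq m]
    {A X Y W : Matrix m m ℝ} (hA : A.PosDef) (hW : W * (X - Yᵀ * A⁻¹ * Y) = 1) :
    (fromBlocks A Y Yᵀ X)⁻¹ =
      fromBlocks (A⁻¹ + A⁻¹ * Y * W * Yᵀ * A⁻¹) (-(A⁻¹ * Y * W)) (-(W * Yᵀ * A⁻¹)) W := by
  have hAA : A⁻¹ * A = 1 := nonsing_inv_mul _ ((isUnit_iff_isUnit_det A).mp hA.isUnit)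
  have hWX : W * X = 1 + W * (Yᵀ * (A⁻¹ * Y)) := by
    rw [← hW]
    simp only [Matrix.mul_sub, Matrix.mul_assoc]
    abel
  apply inv_eq_left_inv
  rw [fromBlocks_multiply, ← fromBlocks_one]
  congr 1 <;>
    simp only [Matrix.add_mul, Matrix.neg_mul, Matrix.mul_assoc, hAA, hWX, Matrix.mul_add,
      Matrix.mul_one] <;>
    abel

/-- KKT sufficiency for the covariance selection problem: let `Σ₀ ≻ 0`,
`S ≻ 0` with `S⁻¹ = [[N, V], [Vᵀ, P]]`, and `f(X,Y) = -log det [[Σ₀,Y],[Yᵀ,X]]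
+ tr(S⁻¹ [[Σ₀,Y],[Yᵀ,X]])`.  If `(X*, Y*)` is feasible (`X* - Y*ᵀ Σ₀⁻¹ Y* ≻ 0`,
`C X* Cᵀ = Σ_T^y`) and there is a symmetric multiplier `M` with
`P + Cᵀ M C = (Z*)⁻¹` and `V + Σ₀⁻¹ Y* (Z*)⁻¹ = 0` where `Z* = X* - Y*ᵀ Σ₀⁻¹ Y*`, then
`f(X*, Y*) ≤ f(X, Y)` for every feasible `(X, Y)`. -/
theorem kkt_sufficiency {n p : ℕ}
    (Sigma0 : Matrix (Fin n) (Fin n) ℝ) (hSigma0 : Sigma0.PosDef)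
    (S : Matrix (Fin n ⊕ Fin n) (Fin n ⊕ Fin n) ℝ) (hS : S.PosDef)
    (N V P : Matrix (Fin n) (Fin n) ℝ) (hSinv : S⁻¹ = fromBlocks N V Vᵀ P)
    (C : Matrix (Fin p) (Fin n) ℝ)
    (SigmaTy : Matrix (Fin p) (Fin p) ℝ) (hSigmaTy : SigmaTy.IsSymm)
    (Xs Ys : Matrix (Fin n) (Fin n) ℝ)
    (hfeas : (Xs - Ysᵀ * Sigma0⁻¹ * Ys).PosDef)
    (hcon : C * Xs * Cᵀ = SigmaTy)
    (M : Matrix (Fin p) (Fin p) ℝ) (hM : M.IsSymm)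
    (hstatX : P + Cᵀ * M * C = (Xs - Ysᵀ * Sigma0⁻¹ * Ys)⁻¹)
    (hstatY : V + Sigma0⁻¹ * Ys * (Xs - Ysᵀ * Sigma0⁻¹ * Ys)⁻¹ = 0) :
    ∀ X Y : Matrix (Fin n) (Fin n) ℝ,
      (X - Yᵀ * Sigma0⁻¹ * Y).PosDef → C * X * Cᵀ = SigmaTy →
      -Real.log (fromBlocks Sigma0 Ys Ysᵀ Xs).det
          + (S⁻¹ * fromBlocks Sigma0 Ys Ysᵀ Xs).trace
        ≤ -Real.log (fromBlocks Sigma0 Y Yᵀ X).det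
          + (S⁻¹ * fromBlocks Sigma0 Y Yᵀ X).trace := by
  intro X Y hZ hX
  set W := (Xs - Ysᵀ * Sigma0⁻¹ * Ys)⁻¹ with hWdef
  have hW : W * (Xs - Ysᵀ * Sigma0⁻¹ * Ys) = 1 :=
    nonsing_inv_mul _ ((isUnit_iff_isUnit_det _).mp hfeas.isUnit)
  have hG := posDef_fromBlocks_of_schur hSigma0 hfeas
  have hH := posDef_fromBlocks_of_schur hSigma0 hZ
  have key := log_det_le_tangent_s12 hG hH
  have hV : V = -(Sigma0⁻¹ * Ys * W) := eq_neg_of_add_eq_zero_left hstatY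
  have hWs : Wᵀ = W := by
    simpa only [conjTranspose_eq_transpose_of_trivial] using hfeas.inv.1.eq
  have hAs : Sigma0⁻¹ᵀ = Sigma0⁻¹ := by
    simpa only [conjTranspose_eq_transpose_of_trivial] using hSigma0.inv.1.eq
  have hVt : Vᵀ = -(W * Ysᵀ * Sigma0⁻¹) := by
    rw [hV, transpose_neg, transpose_mul, transpose_mul, hWs, hAs, Matrix.mul_assoc]
  have hP : P = W - Cᵀ * M * C := eq_sub_of_add_eq hstatX
  have hc : (Cᵀ * M * C * (X - Xs)).trace = 0 := by
    have h : C * (X - Xs) * Cᵀ = 0 := by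
      rw [Matrix.mul_sub, Matrix.sub_mul, hX, hcon, sub_self]
    rw [Matrix.mul_assoc, Matrix.mul_assoc, trace_mul_comm, Matrix.mul_assoc, h, Matrix.mul_zero,
      trace_zero]
  have hzero : ((S⁻¹ - (fromBlocks Sigma0 Ys Ysᵀ Xs)⁻¹) *
      (fromBlocks Sigma0 Y Yᵀ X - fromBlocks Sigma0 Ys Ysᵀ Xs)).trace = 0 := by
    rw [hSinv, inv_fromBlocks_schur hSigma0 hW, ← hV, ← hVt, hP, fromBlocks_sub_fromBlocks,
      fromBlocks_sub_fromBlocks, fromBlocks_multiply, trace_fromBlocks_eq_add]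
    simp only [sub_self, Matrix.mul_zero, Matrix.zero_mul, zero_add, trace_zero,
      sub_sub_cancel_left, Matrix.neg_mul, trace_neg, hc, neg_zero]
  rw [Matrix.sub_mul, trace_sub, Matrix.mul_sub S⁻¹, trace_sub] at hzero
  linarith
end
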